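/- Let ∇ be an ℝ-linear connection of L on E and θ : L → End_C(E) an alternating ℝ-multilinear 1-form such that both ∇ and ∇+θ are flat. Then cs_2(∇, ∇+θ) = −(1/3)·Tr_*(θ∧θ∧θ). -/

import Mathlib

open Module

/-- The trace over `C` of an `ℝ`-linear endomorphism of `E` whose underlying
function happens to be `C`-linear (and `0` otherwise). -/
noncomputable def trR (C : Type*) {E : Type*} [CommRing C] [AddCommGroup E]
    [Module ℝ E] [Module C E] (e : E →ₗ[ℝ] E) : C :=
  letI := Classical.propDecidable
  if h : ∃ g : E →ₗ[C] E, ⇑g = ⇑e then LinearMap.trace C E h.choose else 0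

/-- An ℝ-linear connection of the Lie algebra `L` (with anchor `ρ`) on the `C`-module `E`. -/
def IsConn {L C E : Type*} [LieRing L] [LieAlgebra ℝ L] [CommRing C] [Algebra ℝ C]
    [AddCommGroup E] [Module ℝ E] [Module C E]
    (ρ : L →ₗ[ℝ] Derivation ℝ C C) (D : L →ₗ[ℝ] Module.End ℝ E) : Prop :=
  ∀ (a : L) (f : C) (e : E), D a (f • e) = f • D a e + ρ a f • e

/-- The curvature of an ℝ-linear map `D : L →ₗ[ℝ] End ℝ E`. -/
def curv {L E : Type*} [LieRing L] [LieAlgebra ℝ L] [AddCommGroup E] [Module ℝ E]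
    (D : L →ₗ[ℝ] Module.End ℝ E) (a b : L) : Module.End ℝ E :=
  D a * D b - D b * D a - D ⁅a, b⁆

/-- The curvature as an `End ℝ E`-valued 2-form. -/
def curv2 {L E : Type*} [LieRing L] [LieAlgebra ℝ L] [AddCommGroup E] [Module ℝ E]
    (D : L →ₗ[ℝ] Module.End ℝ E) : (Fin 2 → L) → Module.End ℝ E :=
  fun a => curv D (a 0) (a 1)

/-- The Chevalley–Eilenberg style differential of a `V`-valued `n`-form on `L`,
with respect to an action `act` of `L` on `V`:
`(dω)(a₁,…,a_{n+1}) = Σᵢ (−1)^{i+1} act(aᵢ)(ω(a₁,…,âᵢ,…)) +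
  Σ_{i<j} (−1)^{i+j} ω(⁅aᵢ,aⱼ⁆, a₁,…,âᵢ,…,âⱼ,…)`. -/
def dGen {L V : Type*} [LieRing L] [AddCommGroup V] (act : L → V → V) :
    {n : ℕ} → ((Fin n → L) → V) → ((Fin (n + 1) → L) → V)
  | 0, ω, a => act (a 0) (ω Fin.elim0)
  | (m + 1), ω, a =>
      (∑ i : Fin (m + 2), (-1 : ℤ) ^ (i : ℕ) • act (a i) (ω (fun k => a (i.succAbove k)))) +
      ∑ i : Fin (m + 2), ∑ j : Fin (m + 2),
        if h : (i : ℕ) < (j : ℕ) then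
          (-1 : ℤ) ^ ((i : ℕ) + (j : ℕ)) • ω (Fin.cons ⁅a i, a j⁆
            (fun k : Fin m => a (j.succAbove
              ((⟨(i : ℕ), by have := j.isLt; omega⟩ : Fin (m + 1)).succAbove k))))
        else 0

/-- The differential `d_ρ` on `C`-valued ℝ-linear forms on `L`. -/
def dRho {L C : Type*} [LieRing L] [LieAlgebra ℝ L] [CommRing C] [Algebra ℝ C]
    (ρ : L →ₗ[ℝ] Derivation ℝ C C) {n : ℕ} (ω : (Fin n → L) → C) :
    (Fin (n + 1) → L) → C :=
  dGen (fun a c => ρ a c) ω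

/-- The differential `d^{∇̄}` on `End ℝ E`-valued ℝ-linear forms on `L`,
where `∇̄_a = [∇_a, ·]`. -/
def dEnd {L E : Type*} [LieRing L] [LieAlgebra ℝ L] [AddCommGroup E] [Module ℝ E]
    (D : L →ₗ[ℝ] Module.End ℝ E) {n : ℕ} (ω : (Fin n → L) → Module.End ℝ E) :
    (Fin (n + 1) → L) → Module.End ℝ E :=
  dGen (fun a φ => D a * φ - φ * D a) ω

/-- The wedge product (with composition as multiplication of values) of
`End ℝ E`-valued forms:
`(ω∧η)(a₁,…,a_{m+n}) = (1/(m!·n!)) Σ_{τ} sgn τ · ω(a_{τ(1)},…) ∘ η(a_{τ(m+1)},…)`. -/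
noncomputable def wedge {L E : Type*} [AddCommGroup E] [Module ℝ E] {m n : ℕ}
    (ω : (Fin m → L) → Module.End ℝ E) (η : (Fin n → L) → Module.End ℝ E) :
    (Fin (m + n) → L) → Module.End ℝ E :=
  fun a => ((m.factorial * n.factorial : ℝ))⁻¹ •
    ∑ τ : Equiv.Perm (Fin (m + n)), ((Equiv.Perm.sign τ : ℤ) •
      (ω (fun i => a (τ (Fin.castAdd n i))) * η (fun j => a (τ (Fin.natAdd m j)))))

/-- The `p`-th wedge power of an `End ℝ E`-valued 2-form. -/
noncomputable def wpow {L E : Type*} [AddCommGroup E] [Module ℝ E]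
    (R : (Fin 2 → L) → Module.End ℝ E) :
    (p : ℕ) → (Fin (2 * p) → L) → Module.End ℝ E
  | 0 => fun _ => 1
  | (p + 1) => fun a => wedge R (wpow R p) (fun i => a (Fin.cast (by omega) i))

/-- The `k`-th wedge power of an `End ℝ E`-valued 1-form. -/
noncomputable def wpow1 {L E : Type*} [AddCommGroup E] [Module ℝ E]
    (θ : (Fin 1 → L) → Module.End ℝ E) :
    (k : ℕ) → (Fin k → L) → Module.End ℝ E
  | 0 => fun _ => 1
  | (k + 1) => fun a => wedge θ (wpow1 θ k) (fun i => a (Fin.cast (by omega) i))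

/-- The Chern character form `ch_p(∇) = Tr_*((R^∇)^{∧p})`. -/
noncomputable def chp {L E : Type*} (C : Type*) [LieRing L] [LieAlgebra ℝ L]
    [CommRing C] [AddCommGroup E] [Module ℝ E] [Module C E]
    (D : L →ₗ[ℝ] Module.End ℝ E) (p : ℕ) : (Fin (2 * p) → L) → C :=
  fun a => trR C (wpow (curv2 D) p a)

/-- `∫₀ˢ f(t) dt` for a function `f : ℝ → C` given by a polynomial with
coefficients in the ℝ-algebra `C` (and `0` if `f` is not polynomial). -/
noncomputable def intPolyTo {C : Type*} [CommRing C] [Algebra ℝ C] (s : ℝ) (f : ℝ → C) : C :=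
  letI := Classical.propDecidable
  if h : ∃ P : Polynomial C, ∀ t : ℝ, f t = Polynomial.eval (algebraMap ℝ C t) P then
    ∑ k ∈ Finset.range (h.choose.natDegree + 1),
      (s ^ (k + 1) / ((k : ℝ) + 1)) • h.choose.coeff k
  else 0

/-- The valuewise integral over the standard 2-simplex
`Δ² = {(t₁,t₂) : t₁ ≥ 0, t₂ ≥ 0, t₁ + t₂ ≤ 1}` of a `C`-valued polynomial function. -/
noncomputable def intSimplex2 {C : Type*} [CommRing C] [Algebra ℝ C] (f : ℝ → ℝ → C) : C :=
  intPolyTo 1 (fun t1 => intPolyTo (1 - t1) (fun t2 => f t1 t2))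

/-- The Chern–Simons transgression form for a pair of ℝ-linear connections:
`cs_p(∇⁰,∇¹) = p·∫₀¹ Tr_*(λ ∧ (R_t)^{∧(p−1)}) dt` where `λ = ∇¹ − ∇⁰` and
`R_t` is the curvature of `∇⁰ + t•λ`. -/
noncomputable def csPair {L E : Type*} (C : Type*) [LieRing L] [LieAlgebra ℝ L]
    [CommRing C] [Algebra ℝ C] [AddCommGroup E] [Module ℝ E] [Module C E]
    (D0 D1 : L →ₗ[ℝ] Module.End ℝ E) (p : ℕ) : (Fin (2 * (p - 1) + 1) → L) → C :=
  fun a => (p : ℝ) • intPolyTo 1 (fun t =>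
    trR C (wedge (fun v : Fin 1 → L => (D1 - D0) (v 0))
      (wpow (curv2 (D0 + t • (D1 - D0))) (p - 1))
      (fun i => a (Fin.cast (by omega) i))))

/-- The Chern–Simons transgression form for a triple of ℝ-linear connections:
`cs_p(∇⁰,∇¹,∇²) = −p(p−1)·∫_{Δ²} Tr_*(λ₁ ∧ λ₂ ∧ (R_{(t₁,t₂)})^{∧(p−2)}) dt₁dt₂`
where `λᵢ = ∇ⁱ − ∇⁰` and `R_{(t₁,t₂)}` is the curvature of `∇⁰ + t₁•λ₁ + t₂•λ₂`. -/
noncomputable def csTriple {L E : Type*} (C : Type*) [LieRing L] [LieAlgebra ℝ L]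
    [CommRing C] [Algebra ℝ C] [AddCommGroup E] [Module ℝ E] [Module C E]
    (D0 D1 D2 : L →ₗ[ℝ] Module.End ℝ E) (p : ℕ) : (Fin (2 * (p - 2) + 2) → L) → C :=
  fun a => (-((p : ℝ) * ((p : ℝ) - 1))) • intSimplex2 (fun t1 t2 =>
    trR C (wedge (fun v : Fin 1 → L => (D1 - D0) (v 0))
      (wedge (fun v : Fin 1 → L => (D2 - D0) (v 0))
        (wpow (curv2 (D0 + t1 • (D1 - D0) + t2 • (D2 - D0))) (p - 2)))
      (fun i => a (Fin.cast (by omega) i))))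


/-- The ℝ-linear inclusion `End_C(E) → End_ℝ(E)`. -/
noncomputable def restrEndMap {C E : Type*} [CommRing C] [Algebra ℝ C] [AddCommGroup E]
    [Module ℝ E] [Module C E] [IsScalarTower ℝ C E] :
    (E →ₗ[C] E) →ₗ[ℝ] Module.End ℝ E where
  toFun g := g.restrictScalars ℝ
  map_add' _ _ := rfl
  map_smul' _ _ := rfl

/-- Polynomials over an `ℝ`-algebra vanishing at all real points are zero. -/
theorem poly_zero_aux {C : Type*} [CommRing C] [Algebra ℝ C] (P : Polynomial C)
    (h : ∀ t : ℝ, Polynomial.eval (algebraMap ℝ C t) P = 0) : P = 0 := by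
  ext k
  rw [Polynomial.coeff_zero, ← Module.forall_dual_apply_eq_zero_iff ℝ]
  intro φ
  let Q : Polynomial ℝ := ∑ i ∈ Finset.range (P.natDegree + 1),
    Polynomial.monomial i (φ (P.coeff i))
  have hQ : Q = 0 := by
    apply Polynomial.funext
    intro t
    have := congrArg φ (h t)
    rw [Polynomial.eval_eq_sum_range, map_sum, map_zero] at this
    rw [Polynomial.eval_zero, ← this]
    simp only [Q, Polynomial.eval_finsetSum, Polynomial.eval_monomial]
    refine Finset.sum_congr rfl fun i _ => ?_
    rw [← map_pow, mul_comm (P.coeff i), ← Algebra.smul_def, map_smul, smul_eq_mul, mul_comm]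
  by_cases hk : k ≤ P.natDegree
  · have := congrArg (fun q => Polynomial.coeff q k) hQ
    simp only [Q, Polynomial.finsetSum_coeff, Polynomial.coeff_monomial,
      Polynomial.coeff_zero] at this
    rw [Finset.sum_ite_eq' , if_pos (Finset.mem_range.2 (by omega))] at this
    exact this
  · rw [Polynomial.coeff_eq_zero_of_natDegree_lt (by omega), map_zero]

theorem intPolyTo_aux {C : Type*} [CommRing C] [Algebra ℝ C] (c : C) :
    intPolyTo 1 (fun t : ℝ => (t ^ 2 - t) • c) = (-(1 / 6) : ℝ) • c := by
  classical
  let P : Polynomial C := Polynomial.monomial 2 c - Polynomial.monomial 1 c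
  have hP : ∀ t : ℝ, (t ^ 2 - t) • c = Polynomial.eval (algebraMap ℝ C t) P := by
    intro t
    simp only [P, Polynomial.eval_sub, Polynomial.eval_monomial, Algebra.smul_def, map_sub,
      map_pow]
    ring
  have hex : ∃ P : Polynomial C, ∀ t : ℝ,
      (t ^ 2 - t) • c = Polynomial.eval (algebraMap ℝ C t) P := ⟨P, hP⟩
  unfold intPolyTo
  rw [dif_pos hex]
  have hc : hex.choose = P := by
    rw [← sub_eq_zero]
    apply poly_zero_aux
    intro t
    rw [Polynomial.eval_sub, ← hex.choose_spec t, ← hP t, sub_self]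
  rw [hc]
  have hdeg : P.natDegree + 1 ≤ 3 := by
    have : P.natDegree ≤ 2 := by
      refine (Polynomial.natDegree_sub_le _ _).trans (max_le ?_ ?_)
      · exact Polynomial.natDegree_monomial_le _
      · exact (Polynomial.natDegree_monomial_le _).trans (by norm_num)
    omega
  rw [Finset.sum_subset (Finset.range_mono hdeg)]
  · simp only [P, Finset.sum_range_succ, Finset.sum_range_zero, Polynomial.coeff_sub,
      Polynomial.coeff_monomial]
    norm_num
    module
  · intro k _ hk
    rw [Polynomial.coeff_eq_zero_of_natDegree_lt, smul_zero]
    simp only [Finset.mem_range] at hk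
    omega

section
variable {C E : Type*} [CommRing C] [Algebra ℝ C] [AddCommGroup E]
    [Module ℝ E] [Module C E] [IsScalarTower ℝ C E]

theorem trR_aux (g : E →ₗ[C] E) : trR C (restrEndMap g) = LinearMap.trace C E g := by
  have hex : ∃ g' : E →ₗ[C] E, ⇑g' = ⇑(restrEndMap g : Module.End ℝ E) := ⟨g, rfl⟩
  unfold trR
  rw [dif_pos hex]
  congr 1
  exact DFunLike.coe_injective hex.choose_spec

theorem trR_smul_aux (t : ℝ) (x : Module.End ℝ E)
    (hx : x ∈ LinearMap.range (restrEndMap (C := C) (E := E))) :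
    trR C (t • x) = t • trR C x := by
  obtain ⟨g, rfl⟩ := hx
  rw [← map_smul, trR_aux, trR_aux, ← algebraMap_smul C t g, map_smul, algebraMap_smul]

theorem wedge_mem_aux {L : Type*} {m n : ℕ}
    (ω : (Fin m → L) → Module.End ℝ E) (η : (Fin n → L) → Module.End ℝ E)
    (hω : ∀ a, ω a ∈ LinearMap.range (restrEndMap (C := C) (E := E)))
    (hη : ∀ a, η a ∈ LinearMap.range (restrEndMap (C := C) (E := E)))
    (a : Fin (m + n) → L) :
    wedge ω η a ∈ LinearMap.range (restrEndMap (C := C) (E := E)) := by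
  unfold wedge
  refine Submodule.smul_mem _ _ (Submodule.sum_mem _ fun τ _ => zsmul_mem ?_ _)
  obtain ⟨g, hg⟩ := hω (fun i => a (τ (Fin.castAdd n i)))
  obtain ⟨h, hh⟩ := hη (fun j => a (τ (Fin.natAdd m j)))
  exact ⟨g * h, by rw [← hg, ← hh]; rfl⟩
end

theorem wedge_smul_aux {L E : Type*} [AddCommGroup E] [Module ℝ E] {m n : ℕ} (t : ℝ)
    (ω : (Fin m → L) → Module.End ℝ E) (η : (Fin n → L) → Module.End ℝ E)
    (a : Fin (m + n) → L) :
    wedge ω (fun b => t • η b) a = t • wedge ω η a := by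
  unfold wedge
  simp only [mul_smul_comm, smul_comm _ t, ← Finset.smul_sum]

theorem perm2_aux {V : Type*} [AddCommGroup V] (f : Equiv.Perm (Fin 2) → V) :
    ∑ τ : Equiv.Perm (Fin 2), f τ = f 1 + f (Equiv.swap 0 1) := by
  have : (Finset.univ : Finset (Equiv.Perm (Fin 2))) = {1, Equiv.swap 0 1} := by decide
  rw [this, Finset.sum_pair (by decide)]

theorem wpow_one_aux {L E : Type*} [AddCommGroup E] [Module ℝ E]
    (R : (Fin 2 → L) → Module.End ℝ E) (hR : ∀ a b, R ![a, b] = - R ![b, a])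
    (a : Fin 2 → L) : wpow R 1 a = R a := by
  have h1 : ∀ b : Fin 2 → L, R b = R ![b 0, b 1] := by
    intro b
    congr 1
    ext i
    fin_cases i <;> rfl
  have : wpow R 1 a = wedge (n := 0) R (fun _ => 1) a := rfl
  rw [this]
  unfold wedge
  refine (congrArg _ (perm2_aux _)).trans ?_
  simp only [mul_one]
  rw [h1 (fun i => a (Equiv.swap 0 1 (Fin.castAdd 0 i))), h1 a, h1 (fun i => a _),
    Equiv.Perm.sign_swap (by decide)]
  have e0 : (Fin.castAdd 0 (0 : Fin 2) : Fin (2 + 0)) = 0 := rfl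
  have e1 : (Fin.castAdd 0 (1 : Fin 2) : Fin (2 + 0)) = 1 := rfl
  simp only [e0, e1, Equiv.Perm.sign_one, Equiv.Perm.one_apply]
  erw [Equiv.swap_apply_left, Equiv.swap_apply_right]
  rw [hR (a 1) (a 0)]
  simp only [Units.val_one, Units.val_neg, Nat.factorial]
  norm_num
  module

theorem wedge11_aux {L E : Type*} [AddCommGroup E] [Module ℝ E]
    (T : L → Module.End ℝ E) (a : Fin 2 → L) :
    wedge (m := 1) (n := 1) (fun u : Fin 1 → L => T (u 0)) (fun u : Fin 1 → L => T (u 0)) a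
      = T (a 0) * T (a 1) - T (a 1) * T (a 0) := by
  unfold wedge
  refine (congrArg _ (perm2_aux _)).trans ?_
  rw [Equiv.Perm.sign_swap (by decide)]
  have e0 : (Fin.castAdd 1 (0 : Fin 1) : Fin (1 + 1)) = 0 := rfl
  have e1 : (Fin.natAdd 1 (0 : Fin 1) : Fin (1 + 1)) = 1 := rfl
  simp only [e0, e1, Equiv.Perm.sign_one, Equiv.Perm.one_apply]
  erw [Equiv.swap_apply_left, Equiv.swap_apply_right]
  simp [sub_eq_add_neg]

theorem curv_t_aux {L E : Type*} [LieRing L] [LieAlgebra ℝ L] [AddCommGroup E] [Module ℝ E]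
    (D T : L →ₗ[ℝ] Module.End ℝ E) (h0 : ∀ a b, curv D a b = 0)
    (h1 : ∀ a b, curv (D + T) a b = 0) (t : ℝ) (a b : L) :
    curv (D + t • T) a b = (t ^ 2 - t) • (T a * T b - T b * T a) := by
  have e0 := h0 a b
  have e1 := h1 a b
  have key : curv (D + t • T) a b = (1 - t) • curv D a b + t • curv (D + T) a b
      + (t ^ 2 - t) • (T a * T b - T b * T a) := by
    simp only [curv, LinearMap.add_apply, LinearMap.smul_apply, mul_add, add_mul,
      smul_mul_assoc, mul_smul_comm]
    module
  rw [key, e0, e1, smul_zero, smul_zero, zero_add, zero_add]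

/-- if `∇` and `∇+θ` are flat, then
`cs_2(∇, ∇+θ) = −(1/3)·Tr_*(θ∧θ∧θ)`. -/
theorem stmt18 {L : Type*} {C : Type*} {E : Type*}
    [LieRing L] [LieAlgebra ℝ L] [CommRing C] [Algebra ℝ C] [Module C L]
    [AddCommGroup E] [Module ℝ E] [Module C E] [IsScalarTower ℝ C E]
    [Module.Finite C E] [Module.Free C E]
    (ρ : L →ₗ[ℝ] Derivation ℝ C C)
    (hρ : ∀ (a b : L) (f : C), ρ ⁅a, b⁆ f = ρ a (ρ b f) - ρ b (ρ a f))
    (hLeib : ∀ (a b : L) (f : C), ⁅a, f • b⁆ = f • ⁅a, b⁆ + ρ a f • b)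
    (D : L →ₗ[ℝ] Module.End ℝ E) (hD : IsConn ρ D)
    (θ : L →ₗ[ℝ] (E →ₗ[C] E))
    (hflat : ∀ a b : L, curv D a b = 0)
    (hflat' : ∀ a b : L, curv (D + restrEndMap.comp θ) a b = 0) :
    ∀ v : Fin (2 * (2 - 1) + 1) → L,
      csPair C D (D + restrEndMap.comp θ) 2 v
        = -(1 / 3 : ℝ) •
            trR C (wedge (fun u : Fin 1 → L => ((θ (u 0)).restrictScalars ℝ))
              (wedge (fun u : Fin 1 → L => ((θ (u 0)).restrictScalars ℝ))
                (fun u : Fin 1 → L => ((θ (u 0)).restrictScalars ℝ)))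
              (fun i => v (Fin.cast (by omega) i))) := by
  intro v
  have hT : ∀ a, (θ a).restrictScalars ℝ ∈ LinearMap.range (restrEndMap (C := C) (E := E)) :=
    fun a => ⟨θ a, rfl⟩
  set T : L →ₗ[ℝ] Module.End ℝ E := restrEndMap.comp θ with hTdef
  have hR : ∀ t : ℝ, wpow (curv2 (D + t • T)) 1
      = fun b => (t ^ 2 - t) • wedge (m := 1) (n := 1)
        (fun u : Fin 1 → L => ((θ (u 0)).restrictScalars ℝ))
        (fun u : Fin 1 → L => ((θ (u 0)).restrictScalars ℝ)) b := by
    intro t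
    funext b
    rw [wpow_one_aux]
    · rw [wedge11_aux (fun a => (θ a).restrictScalars ℝ) b]
      exact curv_t_aux D T hflat hflat' t (b 0) (b 1)
    · intro a b
      simp only [curv2, curv_t_aux D T hflat hflat']
      simp only [Matrix.cons_val_zero, Matrix.cons_val_one]
      module
  unfold csPair
  have hsub : D + T - D = T := add_sub_cancel_left D T
  simp only [hsub]
  have hint : ∀ t : ℝ, trR C (wedge (fun v : Fin 1 → L => T (v 0))
      (wpow (curv2 (D + t • T)) (2 - 1)) (fun i => v (Fin.cast (by omega) i)))
      = (t ^ 2 - t) • trR C (wedge (fun u : Fin 1 → L => ((θ (u 0)).restrictScalars ℝ))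
              (wedge (fun u : Fin 1 → L => ((θ (u 0)).restrictScalars ℝ))
                (fun u : Fin 1 → L => ((θ (u 0)).restrictScalars ℝ)))
              (fun i => v (Fin.cast (by omega) i))) := by
    intro t
    rw [← trR_smul_aux]
    · rw [← wedge_smul_aux]
      congr 1
      show wedge (n := 2) _ (wpow (curv2 (D + t • T)) 1) _ = _
      rw [hR t]
      rfl
    · exact wedge_mem_aux _ _ (fun a => hT _)
        (wedge_mem_aux _ _ (fun a => hT _) (fun a => hT _)) _
  simp only [hint]
  rw [intPolyTo_aux, smul_smul]
  norm_num
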